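/- arXiv:1801.01625 — 4 statements merged into one kernel-verified Lean document; each statement's English description precedes it below -/
import Mathlib

section
/- Fix an index k and fix α_j ∈ [0,1] for all j ≠ k. Let f(t) denote SNR of the vector α with its k-th coordinate replaced by t, and let D(t) = ∑_{j≠k} s_j/(1 + α_j · L · s_j) + s_k/(1 + t · L · s_k) + M. Then for every t ∈ [0,1], f has derivative at t equal to L · (s_k)² · ( f(t) − (t² · L · s_k + 2t − 1) ) / ( D(t) · (1 + t · L · s_k)² ). -/
/-- Non-coherent combined SNR of the uplink JR-CoMP network:
`L` is the number of symbols per channel coherence interval, `s m` the per-BS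
received SNR, `α m` the pilot-symbol ratio at BS `m`. -/
noncomputable def SNR (L : ℝ) {M : ℕ} (s α : Fin M → ℝ) : ℝ :=
  (∑ m, (1 - α m) * s m * (α m * L * s m) / (1 + α m * L * s m)) /
  (∑ m, s m / (1 + α m * L * s m) + M)

/-- A finite sum evaluated at an updated point splits off the updated coordinate. -/
theorem sum_update_eq_sum_erase_add {ι : Type*} [Fintype ι] [DecidableEq ι]
    (F : ι → ℝ → ℝ) (α : ι → ℝ) (k : ι) (u : ℝ) :
    ∑ m, F m (Function.update α k u m) = ∑ j ∈ Finset.univ.erase k, F j (α j) + F k u := by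
  rw [← Finset.sum_erase_add _ _ (Finset.mem_univ k), Function.update_self]
  congr 1
  refine Finset.sum_congr rfl fun j hj => ?_
  rw [Function.update_of_ne (Finset.ne_of_mem_erase hj)]

/-- The combined SNR as a function of its `k`-th pilot ratio only. -/
theorem SNR_update (L : ℝ) {M : ℕ} (s α : Fin M → ℝ) (k : Fin M) (u : ℝ) :
    SNR L s (Function.update α k u) =
      (∑ j ∈ Finset.univ.erase k, (1 - α j) * s j * (α j * L * s j) / (1 + α j * L * s j)
          + (1 - u) * s k * (u * L * s k) / (1 + u * L * s k)) /
        (∑ j ∈ Finset.univ.erase k, s j / (1 + α j * L * s j) + s k / (1 + u * L * s k) + M) := by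
  unfold SNR
  rw [sum_update_eq_sum_erase_add
      (fun m x => (1 - x) * s m * (x * L * s m) / (1 + x * L * s m)),
    sum_update_eq_sum_erase_add (fun m x => s m / (1 + x * L * s m))]

/-- Derivative of one summand of the denominator of the combined SNR. -/
theorem hasDerivAt_div_one_add_mul (L c t : ℝ) (h : 1 + t * L * c ≠ 0) :
    HasDerivAt (fun u => c / (1 + u * L * c)) (-(L * c ^ 2) / (1 + t * L * c) ^ 2) t := by
  have hden : HasDerivAt (fun u : ℝ => 1 + u * L * c) (1 * L * c) t :=
    (((hasDerivAt_id' t).mul_const L).mul_const c).const_add 1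
  refine ((hasDerivAt_const t c).fun_div hden h).congr_deriv ?_
  ring

/-- Derivative of one summand of the numerator of the combined SNR. -/
theorem hasDerivAt_signal_term (L c t : ℝ) (h : 1 + t * L * c ≠ 0) :
    HasDerivAt (fun u => (1 - u) * c * (u * L * c) / (1 + u * L * c))
      (-(L * c ^ 2 * (t ^ 2 * L * c + 2 * t - 1)) / (1 + t * L * c) ^ 2) t := by
  have hlin : HasDerivAt (fun u : ℝ => u * L * c) (1 * L * c) t :=
    ((hasDerivAt_id' t).mul_const L).mul_const c
  have hnum := (((hasDerivAt_id' t).const_sub 1).mul_const c).fun_mul hlin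
  refine (hnum.fun_div (hlin.const_add 1) h).congr_deriv ?_
  ring

/-- Partial derivative of the combined SNR in the `k`-th pilot ratio:
freezing `α j ∈ [0,1]` for `j ≠ k`, the one-variable function
`f t = SNR (Function.update α k t)` has, at every `t ∈ [0,1]`, derivative
`L sₖ² (f t − (t² L sₖ + 2t − 1)) / (D t · (1 + t L sₖ)²)` where
`D t = ∑_{j≠k} sⱼ/(1+αⱼ L sⱼ) + sₖ/(1+t L sₖ) + M`. -/
theorem SNR_partial_derivative
    (L : ℝ) (hL : 0 < L) (M : ℕ) (hM : 0 < M) (s : Fin M → ℝ) (hs : ∀ m, 0 < s m)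
    (α : Fin M → ℝ) (k : Fin M) (hα : ∀ j, j ≠ k → α j ∈ Set.Icc (0 : ℝ) 1) :
    ∀ t ∈ Set.Icc (0 : ℝ) 1,
      HasDerivAt (fun u => SNR L s (Function.update α k u))
        (L * (s k) ^ 2 *
            (SNR L s (Function.update α k t) - (t ^ 2 * L * s k + 2 * t - 1)) /
          ((∑ j ∈ Finset.univ.erase k, s j / (1 + α j * L * s j)
              + s k / (1 + t * L * s k) + M) * (1 + t * L * s k) ^ 2)) t := by
  rintro t ⟨ht, -⟩
  have hden : 0 < 1 + t * L * s k := by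
    have := (hs k).le
    positivity
  have hsum : 0 ≤ ∑ j ∈ Finset.univ.erase k, s j / (1 + α j * L * s j) := by
    refine Finset.sum_nonneg fun j hj => ?_
    have hαj := (hα j (Finset.ne_of_mem_erase hj)).1
    have := (hs j).le
    positivity
  have hD : 0 < ∑ j ∈ Finset.univ.erase k, s j / (1 + α j * L * s j)
      + s k / (1 + t * L * s k) + M := by
    have := div_pos (hs k) hden
    positivity
  simp only [SNR_update]
  have hN' := (hasDerivAt_signal_term L (s k) t hden.ne').const_add
    (∑ j ∈ Finset.univ.erase k, (1 - α j) * s j * (α j * L * s j) / (1 + α j * L * s j))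
  have hD' := ((hasDerivAt_div_one_add_mul L (s k) t hden.ne').const_add
    (∑ j ∈ Finset.univ.erase k, s j / (1 + α j * L * s j))).add_const (M : ℝ)
  refine (hN'.fun_div hD' hD.ne').congr_deriv ?_
  generalize ∑ j ∈ Finset.univ.erase k, s j / (1 + α j * L * s j)
      + s k / (1 + t * L * s k) + M = D at hD ⊢
  generalize ∑ j ∈ Finset.univ.erase k, (1 - α j) * s j * (α j * L * s j) / (1 + α j * L * s j)
      + (1 - t) * s k * (t * L * s k) / (1 + t * L * s k) = N
  have hD0 := hD.ne'
  have hden0 := hden.ne'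
  field_simp
  ring
end

section
/- Let α satisfy 0 < α_m < 1 for all m. Then all M partial derivatives of SNR at α vanish if and only if the stationarity condition SNR(α) = (α_m)² · L · s_m + 2 · α_m − 1 holds for every m. -/
/-- The partial derivative of a separable sum only sees the corresponding summand. -/
theorem hasDerivAt_sum_update {ι : Type*} [Fintype ι] [DecidableEq ι] (F : ι → ℝ → ℝ)
    (x : ι → ℝ) (m : ι) {d : ℝ} (h : HasDerivAt (F m) d (x m)) :
    HasDerivAt (fun t => ∑ j, F j (Function.update x m t j)) d (x m) := by
  have key : ∀ j ∈ Finset.univ, HasDerivAt (fun t => F j (Function.update x m t j))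
      (if j = m then d else 0) (x m) := by
    intro j _
    by_cases hj : j = m
    · subst hj
      simpa using h
    · simpa [hj] using hasDerivAt_const (x m) (F j (x j))
  simpa using HasDerivAt.fun_sum key

theorem SNR_denominator_pos {L : ℝ} (hL : 0 < L) {M : ℕ} (hM : 0 < M) {s α : Fin M → ℝ}
    (hs : ∀ m, 0 < s m) (hα : ∀ m, 0 < α m) :
    0 < ∑ m, s m / (1 + α m * L * s m) + (M : ℝ) := by
  have hsum : 0 ≤ ∑ m, s m / (1 + α m * L * s m) := by
    refine Finset.sum_nonneg fun m _ => ?_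
    have := hs m
    have := hα m
    positivity
  have : (0 : ℝ) < M := by exact_mod_cast hM
  linarith

/-- The partial derivatives of the combined SNR at a point with positive coordinates. -/
theorem hasDerivAt_SNR_update {L : ℝ} (hL : 0 < L) {M : ℕ} (hM : 0 < M) {s α : Fin M → ℝ}
    (hs : ∀ m, 0 < s m) (hα : ∀ m, 0 < α m) (m : Fin M) :
    HasDerivAt (fun t => SNR L s (Function.update α m t))
      (L * s m ^ 2 / ((1 + α m * L * s m) ^ 2 * (∑ j, s j / (1 + α j * L * s j) + M)) *
        (SNR L s α - (α m ^ 2 * L * s m + 2 * α m - 1))) (α m) := by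
  have hD := (SNR_denominator_pos hL hM hs hα).ne'
  have hq : 1 + α m * L * s m ≠ 0 := by
    have := hs m
    have := hα m
    positivity
  have hlin : HasDerivAt (fun t : ℝ => t * L * s m) (L * s m) (α m) := by
    simpa using ((hasDerivAt_id (α m)).mul_const L).mul_const (s m)
  have hnum := hasDerivAt_sum_update
    (fun j t => (1 - t) * s j * (t * L * s j) / (1 + t * L * s j)) α m
    (((((hasDerivAt_id (α m)).const_sub 1).mul_const (s m)).mul hlin).div (hlin.const_add 1) hq)
  have hden := (hasDerivAt_sum_update (fun j t => s j / (1 + t * L * s j)) α m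
    ((hasDerivAt_const (α m) (s m)).div (hlin.const_add 1) hq)).add_const (M : ℝ)
  have hquot := hnum.div hden (by simpa only [Function.update_eq_self] using hD)
  refine hquot.congr_deriv ?_
  simp only [Function.update_eq_self, SNR, id, Pi.mul_apply]
  generalize ∑ j, s j / (1 + α j * L * s j) + (M : ℝ) = D at hD ⊢
  generalize ∑ j, (1 - α j) * s j * (α j * L * s j) / (1 + α j * L * s j) = N
  field_simp
  ring

/-- For an interior point `α` (all coordinates in `(0,1)`), all `M` partial
derivatives of the combined SNR vanish at `α` iff the stationarity condition
`SNR α = αₘ² L sₘ + 2 αₘ − 1` holds for every `m`. -/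
theorem SNR_stationarity_condition
    (L : ℝ) (hL : 0 < L) (M : ℕ) (hM : 0 < M) (s : Fin M → ℝ) (hs : ∀ m, 0 < s m)
    (α : Fin M → ℝ) (hα : ∀ m, α m ∈ Set.Ioo (0 : ℝ) 1) :
    (∀ m, HasDerivAt (fun t => SNR L s (Function.update α m t)) 0 (α m)) ↔
    (∀ m, SNR L s α = (α m) ^ 2 * L * s m + 2 * α m - 1) := by
  have hpos : ∀ m, 0 < α m := fun m => (hα m).1
  refine forall_congr' fun m => ?_
  have hderiv := hasDerivAt_SNR_update hL hM hs hpos m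
  have hfactor : L * s m ^ 2 /
      ((1 + α m * L * s m) ^ 2 * (∑ j, s j / (1 + α j * L * s j) + M)) ≠ 0 := by
    have := SNR_denominator_pos hL hM hs hpos
    have := hs m
    have := hpos m
    positivity
  constructor
  · intro h
    exact sub_eq_zero.mp ((mul_eq_zero.mp (hderiv.unique h)).resolve_left hfactor)
  · intro h
    exact hderiv.congr_deriv (by rw [sub_eq_zero.mpr h, mul_zero])
end

section
/- For M = 1 the combined SNR reduces to the single-variable function f(α) = L·s²·α·(1 − α)/(s + 1 + α·L·s). For any reals L > 0 and s > 0, f is strictly concave on the interval [0, 1]. -/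
/-- For `M = 1` the combined SNR reduces to
`f α = L s² α (1 − α)/(s + 1 + α L s)`, and this function is strictly concave
on `[0, 1]` for any `L > 0`, `s > 0`. -/
theorem single_BS_SNR_strictly_concave (L s : ℝ) (hL : 0 < L) (hs : 0 < s) :
    (∀ α ∈ Set.Icc (0 : ℝ) 1,
        SNR L (fun _ : Fin 1 => s) (fun _ => α) =
          L * s ^ 2 * α * (1 - α) / (s + 1 + α * L * s)) ∧
    StrictConcaveOn ℝ (Set.Icc (0 : ℝ) 1)
      (fun α => L * s ^ 2 * α * (1 - α) / (s + 1 + α * L * s)) := by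
  have hD : ∀ α : ℝ, 0 ≤ α → 0 < s + 1 + α * L * s := fun α hα => by positivity
  refine ⟨?_, convex_Icc 0 1, ?_⟩
  · rintro α ⟨hα, -⟩
    have h₁ : 0 < 1 + α * L * s := by positivity
    have h₂ : s / (1 + α * L * s) + 1 = (s + 1 + α * L * s) / (1 + α * L * s) := by
      field_simp
      ring
    have h₃ := hD α hα
    simp only [SNR, Fin.sum_univ_one, Nat.cast_one]
    rw [h₂]
    field_simp
  · rintro x ⟨hx, -⟩ y ⟨hy, -⟩ hxy a b ha hb hab
    have hx' := hD x hx
    have hy' := hD y hy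
    have hz' := hD (a * x + b * y) (by positivity)
    have hsq : 0 < (x - y) ^ 2 := sq_pos_iff.mpr (sub_ne_zero.mpr hxy)
    obtain rfl : b = 1 - a := by linarith
    have key : L * s ^ 2 * (a * x + (1 - a) * y) * (1 - (a * x + (1 - a) * y)) /
          (s + 1 + (a * x + (1 - a) * y) * L * s) -
        (a * (L * s ^ 2 * x * (1 - x) / (s + 1 + x * L * s)) +
          (1 - a) * (L * s ^ 2 * y * (1 - y) / (s + 1 + y * L * s))) =
        s * (s + 1) * (L * s + s + 1) * (L * s) * (a * (1 - a)) * (x - y) ^ 2 /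
          ((s + 1 + x * L * s) * (s + 1 + y * L * s) *
            (s + 1 + (a * x + (1 - a) * y) * L * s)) := by
      rw [← mul_div_assoc, ← mul_div_assoc, div_add_div _ _ hx'.ne' hy'.ne',
        div_sub_div _ _ hz'.ne' (mul_pos hx' hy').ne',
        div_eq_div_iff (mul_pos hz' (mul_pos hx' hy')).ne'
          (mul_pos (mul_pos hx' hy') hz').ne']
      ring
    simp only [smul_eq_mul]
    rw [← sub_pos, key]
    positivity
end

section
/- For M = 1, with f(α) = L·s²·α·(1 − α)/(s + 1 + α·L·s) and L > 0, s > 0: there exists a unique α* ∈ [0, 1] at which f attains its maximum over [0, 1]; this α* satisfies 0 < α* < 1 and the first-order condition f(α*) = (α*)²·L·s + 2·α* − 1. -/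
/-- The stationarity equation of the combined SNR has a solution in `(0, 1)`. -/
lemma exists_stationary_ratio (L s : ℝ) (hL : 0 < L) (hs : 0 < s) :
    ∃ a : ℝ, 0 < a ∧ a < 1 ∧ a ^ 2 * L * s = (s + 1) * (1 - 2 * a) := by
  have hLs : 0 < L * s := mul_pos hL hs
  have hcont : ContinuousOn (fun a : ℝ => a ^ 2 * L * s - (s + 1) * (1 - 2 * a))
      (Set.Icc 0 1) := by fun_prop
  obtain ⟨a, ⟨ha0, ha1⟩, ha⟩ := intermediate_value_Ioo zero_le_one hcont
    (show (0 : ℝ) ∈ Set.Ioo _ _ from ⟨by norm_num; linarith, by norm_num; linarith⟩)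
  exact ⟨a, ha0, ha1, sub_eq_zero.mp ha⟩

/-- The combined SNR, written around a stationary pilot ratio `a` as its value there minus a
nonnegative quadratic defect. -/
lemma combined_snr_eq_sub_defect {L s a x : ℝ} (ha : a ^ 2 * L * s = (s + 1) * (1 - 2 * a))
    (hx : s + 1 + x * L * s ≠ 0) :
    L * s ^ 2 * x * (1 - x) / (s + 1 + x * L * s) =
      s * (1 - 2 * a) - L * s ^ 2 * (x - a) ^ 2 / (s + 1 + x * L * s) := by
  rw [eq_sub_iff_add_eq, ← add_div, div_eq_iff hx]
  linear_combination s * ha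

/-- For a single base station (`M = 1`), `f α = L s² α (1 − α)/(s + 1 + α L s)`
has a unique maximizer `α*` over `[0, 1]`; this maximizer is interior
(`0 < α* < 1`) and satisfies the first-order condition
`f α* = α*² L s + 2 α* − 1`. -/
theorem single_BS_unique_interior_maximizer (L s : ℝ) (hL : 0 < L) (hs : 0 < s) :
    (∃! a : ℝ, a ∈ Set.Icc (0 : ℝ) 1 ∧
        IsMaxOn (fun α => L * s ^ 2 * α * (1 - α) / (s + 1 + α * L * s))
          (Set.Icc (0 : ℝ) 1) a) ∧
    ∀ a ∈ Set.Icc (0 : ℝ) 1,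
      IsMaxOn (fun α => L * s ^ 2 * α * (1 - α) / (s + 1 + α * L * s))
          (Set.Icc (0 : ℝ) 1) a →
        0 < a ∧ a < 1 ∧
          L * s ^ 2 * a * (1 - a) / (s + 1 + a * L * s) = a ^ 2 * L * s + 2 * a - 1 := by
  obtain ⟨a, ha0, ha1, ha⟩ := exists_stationary_ratio L s hL hs
  have hden : ∀ x ∈ Set.Icc (0 : ℝ) 1, 0 < s + 1 + x * L * s := fun x hx => by
    have := hx.1
    positivity
  have hsnr := fun x hx => combined_snr_eq_sub_defect (x := x) ha (hden x hx).ne'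
  have haI : a ∈ Set.Icc (0 : ℝ) 1 := ⟨ha0.le, ha1.le⟩
  have hmax : IsMaxOn (fun α => L * s ^ 2 * α * (1 - α) / (s + 1 + α * L * s))
      (Set.Icc (0 : ℝ) 1) a := by
    refine isMaxOn_iff.mpr fun x hx => ?_
    have hdefect : 0 ≤ L * s ^ 2 * (x - a) ^ 2 / (s + 1 + x * L * s) :=
      div_nonneg (by positivity) (hden x hx).le
    simp only [hsnr x hx, hsnr a haI, sub_self]
    simpa using hdefect
  have huniq : ∀ b ∈ Set.Icc (0 : ℝ) 1,
      IsMaxOn (fun α => L * s ^ 2 * α * (1 - α) / (s + 1 + α * L * s))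
        (Set.Icc (0 : ℝ) 1) b → b = a := by
    intro b hb hbmax
    by_contra hne
    have hle := isMaxOn_iff.mp hbmax a haI
    have hdefect : 0 < L * s ^ 2 * (b - a) ^ 2 / (s + 1 + b * L * s) := by
      have hsub : b - a ≠ 0 := sub_ne_zero.mpr hne
      exact div_pos (by positivity) (hden b hb)
    simp only [hsnr b hb, hsnr a haI, sub_self] at hle
    norm_num at hle
    linarith
  refine ⟨⟨a, ⟨haI, hmax⟩, fun b hb => huniq b hb.1 hb.2⟩, fun b hb hbmax => ?_⟩
  obtain rfl := huniq b hb hbmax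
  refine ⟨ha0, ha1, ?_⟩
  rw [hsnr b hb, sub_self]
  linear_combination -ha
end
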